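/- Let H be a Hopf algebra over a field k, suppose r ∈ H satisfies the 1-dimensional partial comodule equations, set e := r·S(r), let A be the smallest right coideal subalgebra of H containing e, and let π : H → H/(H·A⁺) be the canonical k-linear quotient map. Then π(S(r)) is grouplike in the quotient, in the sense that (π ⊗ π)(Δ(S(r))) = π(S(r)) ⊗ π(S(r)) in (H/(H·A⁺)) ⊗ (H/(H·A⁺)). -/

import Mathlib

open TensorProduct

/-- The five 1-dimensional partial comodule equations for an element `r` of a Hopf
algebra `H`: `ε(r) = 1`; `r ⊗ r·S(r) = r₍₁₎ ⊗ r₍₂₎·S(r)`; `r·S(r₍₁₎) ⊗ r₍₂₎ = r·S(r) ⊗ r`;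
`r ⊗ S(r)·r = r₍₁₎ ⊗ S(r₍₂₎)·r`; `S(r)·r ⊗ r = S(r)·r₍₁₎ ⊗ r₍₂₎`. -/
def OneDimPCM (k : Type*) {H : Type*} [Field k] [Ring H] [HopfAlgebra k H] (r : H) : Prop :=
  Coalgebra.counit (R := k) r = 1
  ∧ r ⊗ₜ[k] (r * HopfAlgebra.antipode (R := k) r)
      = Coalgebra.comul (R := k) r * ((1 : H) ⊗ₜ[k] HopfAlgebra.antipode (R := k) r)
  ∧ (r ⊗ₜ[k] (1 : H)) *
        (LinearMap.rTensor H (HopfAlgebra.antipode (R := k)) (Coalgebra.comul (R := k) r))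
      = (r * HopfAlgebra.antipode (R := k) r) ⊗ₜ[k] r
  ∧ r ⊗ₜ[k] (HopfAlgebra.antipode (R := k) r * r)
      = (LinearMap.lTensor H (HopfAlgebra.antipode (R := k)) (Coalgebra.comul (R := k) r))
          * ((1 : H) ⊗ₜ[k] r)
  ∧ (HopfAlgebra.antipode (R := k) r * r) ⊗ₜ[k] r
      = ((HopfAlgebra.antipode (R := k) r) ⊗ₜ[k] (1 : H)) * Coalgebra.comul (R := k) r

/-!
Write `Δ`, `S`, `ε` for the structure maps of `H`. Since `S` reverses the comultiplication,
applying `S` to the first leg of `r ⊗ S(r) r = r₍₁₎ ⊗ S(r₍₂₎) r` and swapping the legs gives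
`S(r) r ⊗ S(r) = Δ(S(r)) (r ⊗ 1)`. Multiplying by `S(r) ⊗ 1` on the right, with `e = r S(r)`,
`S(r) e ⊗ S(r) = Δ(S(r)) (e ⊗ 1)`. As `ε(e) = 1`, the element `e - 1` lies in `A⁺`, so right
multiplication by `e` is invisible to `π : H → H / H A⁺`, and `(π ⊗ id) Δ(S(r)) = π(S(r)) ⊗ S(r)`.
-/

section TensorProduct

variable {R A B : Type*} [CommSemiring R] [Semiring A] [Algebra R A] [Semiring B] [Algebra R B]

theorem mul_one_tmul_eq_lTensor_mulRight (x : A ⊗[R] B) (b : B) :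
    x * (1 ⊗ₜ[R] b) = LinearMap.lTensor A (LinearMap.mulRight R b) x := by
  rw [← LinearMap.mulRight_apply (R := R), LinearMap.mulRight_tmul, LinearMap.mulRight_one]
  rfl

theorem mul_tmul_one_eq_rTensor_mulRight (x : A ⊗[R] B) (a : A) :
    x * (a ⊗ₜ[R] 1) = LinearMap.rTensor B (LinearMap.mulRight R a) x := by
  rw [← LinearMap.mulRight_apply (R := R), LinearMap.mulRight_tmul, LinearMap.mulRight_one]
  rfl

end TensorProduct

section Antipode

open Coalgebra HopfAlgebra WithConv

theorem toConv_includeLeft_mul_toConv_includeRight {R C : Type*} [CommSemiring R] [Semiring C]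
    [Algebra R C] [Coalgebra R C] :
    toConv (Algebra.TensorProduct.includeLeft : C →ₐ[R] C ⊗[R] C).toLinearMap *
        toConv (Algebra.TensorProduct.includeRight : C →ₐ[R] C ⊗[R] C).toLinearMap =
      toConv (comul (R := R) (A := C)) := by
  ext c
  simp [(ℛ R c).convMul_apply, (ℛ R c).eq]

variable {R H : Type*} [CommSemiring R] [Semiring H] [HopfAlgebra R H]

theorem toConv_algHom_comp_antipode_mul_toConv_algHom {B : Type*} [Semiring B] [Algebra R B]
    (f : H →ₐ[R] B) :
    toConv (f.toLinearMap ∘ₗ antipode R) * toConv f.toLinearMap = 1 := by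
  apply ofConv_injective
  have h := LinearMap.algHom_comp_convMul_distrib f (toConv (antipode R (A := H)))
    (toConv LinearMap.id)
  simp only [LinearMap.antipode_mul_id, LinearMap.comp_id] at h
  rw [← h]
  ext c
  simp [LinearMap.convOne_def]

theorem comul_comp_antipode :
    comul ∘ₗ antipode R =
      (TensorProduct.comm R H H).toLinearMap ∘ₗ
        TensorProduct.map (antipode R) (antipode R) ∘ₗ comul := by
  let inl : H →ₐ[R] H ⊗[R] H := Algebra.TensorProduct.includeLeft
  let inr : H →ₐ[R] H ⊗[R] H := Algebra.TensorProduct.includeRight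
  -- The swapped coproduct of antipodes is `(inr ∘ S) * (inl ∘ S)`, the inverse of `inl * inr = Δ`.
  have swap_eq : toConv ((TensorProduct.comm R H H).toLinearMap ∘ₗ
        TensorProduct.map (antipode R) (antipode R) ∘ₗ comul) =
      toConv (inr.toLinearMap ∘ₗ antipode R) * toConv (inl.toLinearMap ∘ₗ antipode R) := by
    ext c
    rw [(ℛ R c).convMul_apply]
    simp [inl, inr, ← (ℛ R c).eq]
  have left_inv : toConv ((TensorProduct.comm R H H).toLinearMap ∘ₗ
        TensorProduct.map (antipode R) (antipode R) ∘ₗ comul) * toConv comul = 1 := by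
    rw [swap_eq, ← toConv_includeLeft_mul_toConv_includeRight, mul_assoc,
      ← mul_assoc (toConv (inl.toLinearMap ∘ₗ antipode R)),
      toConv_algHom_comp_antipode_mul_toConv_algHom inl, one_mul,
      toConv_algHom_comp_antipode_mul_toConv_algHom inr]
  exact (toConv_injective (left_inv_eq_right_inv left_inv LinearMap.comul_right_inv)).symm

theorem comul_antipode_mul_tmul_one {r : H}
    (hr : r ⊗ₜ[R] (antipode R r * r) =
      LinearMap.lTensor H (antipode R) (comul (R := R) r) * (1 ⊗ₜ[R] r)) :
    comul (R := R) (antipode R r) * (r ⊗ₜ[R] 1) = (antipode R r * r) ⊗ₜ[R] antipode R r := by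
  have comul_antipode : comul (R := R) (antipode R r) =
      Algebra.TensorProduct.comm R H H
        (TensorProduct.map (antipode R) (antipode R) (comul r)) :=
    LinearMap.congr_fun comul_comp_antipode r
  calc comul (R := R) (antipode R r) * (r ⊗ₜ[R] 1)
      = Algebra.TensorProduct.comm R H H
          (TensorProduct.map (antipode R) (antipode R) (comul r) * (1 ⊗ₜ[R] r)) := by
        rw [comul_antipode, map_mul, Algebra.TensorProduct.comm_tmul]
    _ = Algebra.TensorProduct.comm R H H (LinearMap.rTensor H (antipode R)
          (LinearMap.lTensor H (antipode R) (comul (R := R) r) * (1 ⊗ₜ[R] r))) := by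
        rw [mul_one_tmul_eq_lTensor_mulRight, mul_one_tmul_eq_lTensor_mulRight,
          ← LinearMap.rTensor_comp_lTensor, LinearMap.comp_apply, ← LinearMap.comp_apply,
          LinearMap.lTensor_comp_rTensor, ← LinearMap.rTensor_comp_lTensor, LinearMap.comp_apply]
    _ = (antipode R r * r) ⊗ₜ[R] antipode R r := by
        rw [← hr, LinearMap.rTensor_tmul, Algebra.TensorProduct.comm_tmul]

theorem rTensor_comul_antipode_eq_tmul {M : Type*} [AddCommMonoid M] [Module R M] {r : H}
    (hr : r ⊗ₜ[R] (antipode R r * r) =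
      LinearMap.lTensor H (antipode R) (comul (R := R) r) * (1 ⊗ₜ[R] r))
    (f : H →ₗ[R] M) (hf : ∀ h, f (h * (r * antipode R r)) = f h) :
    LinearMap.rTensor H f (comul (antipode R r)) = f (antipode R r) ⊗ₜ[R] antipode R r := by
  set e := r * antipode R r
  have f_comp_mulRight : f ∘ₗ LinearMap.mulRight R e = f := LinearMap.ext hf
  have comul_mul_e : comul (R := R) (antipode R r) * (e ⊗ₜ[R] 1) =
      (antipode R r * e) ⊗ₜ[R] antipode R r := by
    calc comul (R := R) (antipode R r) * (e ⊗ₜ[R] 1)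
        = comul (R := R) (antipode R r) * (r ⊗ₜ[R] 1) * (antipode R r ⊗ₜ[R] 1) := by
          rw [mul_assoc, Algebra.TensorProduct.tmul_mul_tmul, mul_one]
      _ = (antipode R r * e) ⊗ₜ[R] antipode R r := by
          rw [comul_antipode_mul_tmul_one hr, Algebra.TensorProduct.tmul_mul_tmul, mul_one,
            mul_assoc]
  calc LinearMap.rTensor H f (comul (antipode R r))
      = LinearMap.rTensor H f (comul (antipode R r) * (e ⊗ₜ[R] 1)) := by
        rw [mul_tmul_one_eq_rTensor_mulRight, ← LinearMap.rTensor_comp_apply, f_comp_mulRight]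
    _ = f (antipode R r) ⊗ₜ[R] antipode R r := by
        rw [comul_mul_e, LinearMap.rTensor_tmul, hf]

end Antipode

/-- The subspace `H A⁺` of a bialgebra `H`, where `A⁺` is the kernel of the counit on the
subalgebra `A`; the projection `π` is the quotient map by it. It is encoded as an `R`-submodule
rather than as a left ideal, so that the quotient is directly an `R`-module. -/
def mulAugmentation {R H : Type*} [CommSemiring R] [Semiring H] [Bialgebra R H]
    (A : Subalgebra R H) : Submodule R H :=
  Submodule.span R {x : H | ∃ (h : H) (a : H), a ∈ A
    ∧ Coalgebra.counit (R := R) a = 0 ∧ x = h * a}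

theorem mul_sub_self_mem_mulAugmentation {R H : Type*} [CommRing R] [Ring H] [Bialgebra R H]
    {A : Subalgebra R H} {e : H} (heA : e ∈ A) (hε : Coalgebra.counit (R := R) e = 1) (h : H) :
    h * e - h ∈ mulAugmentation A := by
  have counit_sub_one : Coalgebra.counit (R := R) (e - 1) = 0 := by
    rw [map_sub, hε, Bialgebra.counit_one, sub_self]
  exact Submodule.subset_span
    ⟨h, e - 1, A.sub_mem heA A.one_mem, counit_sub_one, (mul_sub_one h e).symm⟩

theorem stmt13_general {R H : Type*} [CommRing R] [Ring H] [HopfAlgebra R H]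
    {r : H} (hε : Coalgebra.counit (R := R) r = 1)
    (hr : r ⊗ₜ[R] (HopfAlgebra.antipode R r * r) =
      LinearMap.lTensor H (HopfAlgebra.antipode R) (Coalgebra.comul (R := R) r) * (1 ⊗ₜ[R] r))
    {A : Subalgebra R H} (heA : r * HopfAlgebra.antipode R r ∈ A) :
    TensorProduct.map (mulAugmentation A).mkQ (mulAugmentation A).mkQ
        (Coalgebra.comul (R := R) (HopfAlgebra.antipode R r)) =
      (mulAugmentation A).mkQ (HopfAlgebra.antipode R r) ⊗ₜ[R]
        (mulAugmentation A).mkQ (HopfAlgebra.antipode R r) := by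
  have counit_e : Coalgebra.counit (R := R) (r * HopfAlgebra.antipode R r) = 1 := by
    rw [Bialgebra.counit_mul, HopfAlgebra.counit_antipode, hε, mul_one]
  have mkQ_mul_e (h : H) : (mulAugmentation A).mkQ (h * (r * HopfAlgebra.antipode R r)) =
      (mulAugmentation A).mkQ h :=
    (Submodule.Quotient.eq _).2 (mul_sub_self_mem_mulAugmentation heA counit_e h)
  rw [← LinearMap.lTensor_comp_rTensor, LinearMap.comp_apply,
    rTensor_comul_antipode_eq_tmul hr _ mkQ_mul_e, LinearMap.lTensor_tmul]

/-- if `r ∈ H` satisfies the 1-dimensional partial comodule equations,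
`e := r·S(r)`, `A` is the smallest right coideal subalgebra containing `e` and
`π : H → H/(H·A⁺)` is the quotient map, then `π(S(r))` is grouplike in the quotient
coalgebra: `(π ⊗ π)(Δ(S(r))) = π(S(r)) ⊗ π(S(r))`. -/
theorem stmt13 (k H : Type*) [Field k] [Ring H] [HopfAlgebra k H]
    (r : H) (hr : OneDimPCM k r)
    (e : H) (he : e = r * HopfAlgebra.antipode (R := k) r)
    (A : Subalgebra k H)
    (hA : ∀ a ∈ A, Coalgebra.comul (R := k) a ∈
      Submodule.span k {x : H ⊗[k] H | ∃ b ∈ A, ∃ h : H, x = b ⊗ₜ[k] h})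
    (heA : e ∈ A)
    (hmin : ∀ A' : Subalgebra k H,
      (∀ a ∈ A', Coalgebra.comul (R := k) a ∈
        Submodule.span k {x : H ⊗[k] H | ∃ b ∈ A', ∃ h : H, x = b ⊗ₜ[k] h}) →
      e ∈ A' → A ≤ A')
    (B : Submodule k H)
    (hB : B = Submodule.span k {x : H | ∃ (h : H) (a : H), a ∈ A
      ∧ Coalgebra.counit (R := k) a = 0 ∧ x = h * a}) :
    TensorProduct.map B.mkQ B.mkQ
        (Coalgebra.comul (R := k) (HopfAlgebra.antipode (R := k) r))
      = B.mkQ (HopfAlgebra.antipode (R := k) r) ⊗ₜ[k]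
          B.mkQ (HopfAlgebra.antipode (R := k) r) := by
  subst he hB
  exact stmt13_general hr.1 hr.2.2.2.1 heA
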